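/- arXiv:2604.17424 — 6 statements merged into one kernel-verified Lean document; each statement's English description precedes it below -/
import Mathlib

section
/- For every integer k ≥ 3, the two partitions α_k = {6, 6, 1, 1, ..., 1} (with k−2 parts equal to 1) and β_k = {9, 2, 2, 1, ..., 1} (with k−3 parts equal to 1) are distinct partitions of k+10, each with exactly k parts, and pre_k(α_k) = pre_k(β_k) = {36}. -/
/-- `preK k P` is the multiset of products of all `k`-element sub-multisets of the
multiset of parts `P`; it is empty when `P` has fewer than `k` elements. -/
def preK (k : ℕ) (P : Multiset ℕ) : Multiset ℕ :=
  (P.powersetCard k).map Multiset.prod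

/-! Prepending ones to a multiset increases its cardinality and its sum by the number of ones but
keeps its product, and the product is all that `preK k` records of a multiset of `k` parts. So it is
enough that `{6, 6, 1}` and `{9, 2, 2}` are distinct, with the same cardinality, the same sum and
the same product. -/

section ReplicateOne

open Multiset

theorem preK_of_card_eq {k : ℕ} {P : Multiset ℕ} (hP : P.card = k) : preK k P = {P.prod} := by
  rw [preK, ← hP, powersetCard_self, map_singleton]

theorem card_replicate_add {X : Type*} (m : ℕ) (a : X) (s : Multiset X) :
    (replicate m a + s).card = m + s.card := by
  rw [card_add, card_replicate]

theorem sum_replicate_one_add {R : Type*} [AddCommMonoidWithOne R] (m : ℕ) (s : Multiset R) :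
    (replicate m 1 + s).sum = m + s.sum := by
  rw [sum_add, sum_replicate, nsmul_one]

theorem prod_replicate_one_add {M : Type*} [CommMonoid M] (m : ℕ) (s : Multiset M) :
    (replicate m 1 + s).prod = s.prod := by
  rw [prod_add, prod_replicate, one_pow, one_mul]

theorem forall_mem_replicate_add {X : Type*} {p : X → Prop} {a : X} {s : Multiset X} (m : ℕ)
    (ha : p a) (hs : ∀ x ∈ s, p x) : ∀ x ∈ replicate m a + s, p x := by
  intro x hx
  rcases mem_add.mp hx with hxa | hxs
  · rwa [eq_of_mem_replicate hxa]
  · exact hs x hxs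

theorem preK_replicate_one_add (m : ℕ) (P : Multiset ℕ) :
    preK (m + P.card) (replicate m 1 + P) = {P.prod} := by
  rw [preK_of_card_eq (card_replicate_add m 1 P), prod_replicate_one_add]

end ReplicateOne

theorem stmt_0 (k : ℕ) (hk : 3 ≤ k) :
    let α : Multiset ℕ := 6 ::ₘ 6 ::ₘ Multiset.replicate (k - 2) 1
    let β : Multiset ℕ := 9 ::ₘ 2 ::ₘ 2 ::ₘ Multiset.replicate (k - 3) 1
    α ≠ β ∧
    (∀ x ∈ α, 0 < x) ∧ α.sum = k + 10 ∧ α.card = k ∧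
    (∀ x ∈ β, 0 < x) ∧ β.sum = k + 10 ∧ β.card = k ∧
    preK k α = {36} ∧ preK k β = {36} := by
  intro α β
  obtain ⟨m, rfl⟩ : ∃ m, k = m + 3 := Nat.exists_eq_add_of_le' hk
  have hα : α = Multiset.replicate m 1 + {6, 6, 1} := by
    rw [add_comm]
    simp only [α, Multiset.insert_eq_cons, Multiset.cons_add, Multiset.singleton_add,
      Nat.reduceSubDiff, Multiset.replicate_succ]
  have hβ : β = Multiset.replicate m 1 + {9, 2, 2} := by
    rw [add_comm]
    simp only [β, Multiset.insert_eq_cons, Multiset.cons_add, Multiset.singleton_add,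
      Nat.add_sub_cancel]
  rw [hα, hβ]
  exact ⟨(add_right_injective _).ne (by decide),
    forall_mem_replicate_add m one_pos (by decide), sum_replicate_one_add m {6, 6, 1},
    card_replicate_add m 1 {6, 6, 1},
    forall_mem_replicate_add m one_pos (by decide), sum_replicate_one_add m {9, 2, 2},
    card_replicate_add m 1 {9, 2, 2},
    preK_replicate_one_add m {6, 6, 1}, preK_replicate_one_add m {9, 2, 2}⟩
end

section
/- Let p > q be prime numbers and let m be a positive integer with m(q−1) ≥ p−1. Then the multisets λ = {q(1 + m(p−1)), 1 + m(q−1), p} and μ = {p(1 + m(q−1)), 1 + m(p−1), q} are distinct partitions of p + q + 1 + m(pq−1), each with exactly three parts, and pre_3(λ) = pre_3(μ) = {pq(1 + m(p−1))(1 + m(q−1))}. -/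
/-!
The two triples are exchanged by swapping `p` and `q`, while their sum and product are symmetric
in `p` and `q`. They differ because `q` is a part of `μ` but, once `m ≥ 2`, not of `λ`; and
`m = 1` is excluded by `m(q - 1) ≥ p - 1 > q - 1`.
-/

/-- The multiset of parts `{q(1 + m(p - 1)), 1 + m(q - 1), p}`, called `λ` in the informal
statement; `μ` is the same triple with `p` and `q` exchanged, i.e. `tripleParts m q p`. -/
def tripleParts (m p q : ℕ) : Multiset ℕ :=
  {q * (1 + m * (p - 1)), 1 + m * (q - 1), p}

theorem preK_card (P : Multiset ℕ) : preK P.card P = {P.prod} := by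
  rw [preK, Multiset.powersetCard_self, Multiset.map_singleton]

section tripleParts

variable {m p q : ℕ}

theorem mem_tripleParts {x : ℕ} :
    x ∈ tripleParts m p q ↔ x = q * (1 + m * (p - 1)) ∨ x = 1 + m * (q - 1) ∨ x = p := by
  simp [tripleParts]

theorem card_tripleParts : (tripleParts m p q).card = 3 := rfl

theorem pos_of_mem_tripleParts (hp : 0 < p) (hq : 0 < q) : ∀ x ∈ tripleParts m p q, 0 < x := by
  intro x hx
  rcases mem_tripleParts.mp hx with rfl | rfl | rfl <;> positivity

theorem sum_tripleParts (hp : 0 < p) (hq : 0 < q) :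
    (tripleParts m p q).sum = p + q + 1 + m * (p * q - 1) := by
  have coeff_of_m : q * (p - 1) + (q - 1) = p * q - 1 := by
    rw [Nat.mul_sub_one, mul_comm q p]
    have := Nat.le_mul_of_pos_left q hp
    omega
  calc (tripleParts m p q).sum
      = q * (1 + m * (p - 1)) + (1 + m * (q - 1) + p) := by simp [tripleParts]
    _ = p + q + 1 + m * (q * (p - 1) + (q - 1)) := by ring
    _ = p + q + 1 + m * (p * q - 1) := by rw [coeff_of_m]

theorem prod_tripleParts :
    (tripleParts m p q).prod = p * q * (1 + m * (p - 1)) * (1 + m * (q - 1)) := by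
  simp only [tripleParts, Multiset.insert_eq_cons, Multiset.prod_cons, Multiset.prod_singleton]
  ring

theorem preK_three_tripleParts :
    preK 3 (tripleParts m p q) = {p * q * (1 + m * (p - 1)) * (1 + m * (q - 1))} := by
  rw [← prod_tripleParts, ← preK_card, card_tripleParts]

theorem tripleParts_ne_swap (hp : 1 < p) (hq : 1 < q) (hpq : p ≠ q) (hm : 1 < m) :
    tripleParts m p q ≠ tripleParts m q p := by
  have q_lt_first : q < q * (1 + m * (p - 1)) :=
    lt_mul_of_one_lt_right (by omega) <|
      Nat.lt_add_of_pos_right <| Nat.mul_pos (by omega) (by omega)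
  have q_lt_second : q < 1 + m * (q - 1) := by
    have : 1 * (q - 1) < m * (q - 1) := Nat.mul_lt_mul_of_pos_right hm (by omega)
    omega
  have q_notMem : q ∉ tripleParts m p q := by
    rw [mem_tripleParts]
    rintro (h | h | h)
    exacts [q_lt_first.ne h, q_lt_second.ne h, hpq h.symm]
  have q_mem : q ∈ tripleParts m q p := mem_tripleParts.mpr (.inr (.inr rfl))
  exact fun h => q_notMem (h ▸ q_mem)

end tripleParts

theorem stmt_3_general {p q m : ℕ} (hp : 1 < p) (hq : 1 < q) (hpq : p ≠ q) (hm : 1 < m) :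
    let lam := tripleParts m p q
    let mu := tripleParts m q p
    lam ≠ mu ∧
    (∀ x ∈ lam, 0 < x) ∧ lam.sum = p + q + 1 + m * (p * q - 1) ∧ lam.card = 3 ∧
    (∀ x ∈ mu, 0 < x) ∧ mu.sum = p + q + 1 + m * (p * q - 1) ∧ mu.card = 3 ∧
    preK 3 lam = {p * q * (1 + m * (p - 1)) * (1 + m * (q - 1))} ∧
    preK 3 mu = {p * q * (1 + m * (p - 1)) * (1 + m * (q - 1))} := by
  intro lam mu
  have p_pos : 0 < p := zero_lt_one.trans hp
  have q_pos : 0 < q := zero_lt_one.trans hq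
  have sum_mu : mu.sum = p + q + 1 + m * (p * q - 1) := by
    rw [sum_tripleParts q_pos p_pos, add_comm q p, mul_comm q p]
  have preK_mu : preK 3 mu = {p * q * (1 + m * (p - 1)) * (1 + m * (q - 1))} := by
    rw [preK_three_tripleParts, mul_comm q p, mul_right_comm]
  exact ⟨tripleParts_ne_swap hp hq hpq hm,
    pos_of_mem_tripleParts p_pos q_pos, sum_tripleParts p_pos q_pos, card_tripleParts,
    pos_of_mem_tripleParts q_pos p_pos, sum_mu, card_tripleParts,
    preK_three_tripleParts, preK_mu⟩

theorem stmt_3 (p q m : ℕ) (hp : p.Prime) (hq : q.Prime) (hpq : q < p)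
    (hm : 1 ≤ m) (hm' : p - 1 ≤ m * (q - 1)) :
    let lam : Multiset ℕ := {q * (1 + m * (p - 1)), 1 + m * (q - 1), p}
    let mu : Multiset ℕ := {p * (1 + m * (q - 1)), 1 + m * (p - 1), q}
    lam ≠ mu ∧
    (∀ x ∈ lam, 0 < x) ∧ lam.sum = p + q + 1 + m * (p * q - 1) ∧ lam.card = 3 ∧
    (∀ x ∈ mu, 0 < x) ∧ mu.sum = p + q + 1 + m * (p * q - 1) ∧ mu.card = 3 ∧
    preK 3 lam = {p * q * (1 + m * (p - 1)) * (1 + m * (q - 1))} ∧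
    preK 3 mu = {p * q * (1 + m * (p - 1)) * (1 + m * (q - 1))} := by
  have one_lt_m : 1 < m := Nat.lt_of_mul_lt_mul_right (a := q - 1) (by have := hq.pos; omega)
  exact stmt_3_general hp.one_lt hq.one_lt hpq.ne' one_lt_m
end

section
/- Let n ≥ 1 and let 1 ≤ k < ℓ be integers. If pre_k is injective on the set of partitions of n with exactly ℓ parts, then pre_{ℓ−k} is also injective on the set of partitions of n with exactly ℓ parts. -/
/-!
Every part of `s` lies in the same number of `j`-element sub-multisets of `s`, so for
`1 ≤ j ≤ card s` the product of all the products of such sub-multisets is a positive power of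
`s.prod`. Roots being unique, these products determine `s.prod`. The product `r` of the complement
of a sub-multiset with product `q` is in turn determined by `q * r = s.prod`, by cancellation, so
they also determine the products of the `(card s - j)`-element sub-multisets.
-/

open Multiset

section Multiset

variable {α β γ δ : Type*}

theorem map_eq_map_of_map_eq_map {s : Multiset α} {t : Multiset β} {f : α → γ} {g : β → γ}
    {f' : α → δ} {g' : β → δ} (h : s.map f = t.map g)
    (hfg : ∀ a ∈ s, ∀ b ∈ t, f a = g b → f' a = g' b) : s.map f' = t.map g' := by
  rw [← rel_eq, rel_map] at h ⊢
  exact h.mono hfg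

theorem powersetCard_eq_filter_powerset (k : ℕ) (s : Multiset α) :
    s.powersetCard k = s.powerset.filter (card · = k) := by
  induction s using Multiset.induction_on generalizing k with
  | empty => cases k <;> simp [filter_singleton, powersetCard_zero_right]
  | cons a s ih =>
    cases k with
    | zero => simp [filter_map, ← ih]
    | succ k => simp [filter_map, ← ih]

theorem map_sub_powerset [DecidableEq α] (s : Multiset α) :
    s.powerset.map (s - ·) = s.powerset := by
  conv_rhs => rw [← antidiagonal_map_fst, antidiagonal_eq_map_powerset, map_map]
  rfl

theorem map_sub_powersetCard [DecidableEq α] {s : Multiset α} {j k : ℕ} (h : j + k = card s) :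
    (s.powersetCard j).map (s - ·) = s.powersetCard k := by
  have card_sub_eq_iff : ∀ t ∈ s.powerset, card t = j ↔ card (s - t) = k := by
    intro t ht
    have hts : t ≤ s := mem_powerset.mp ht
    have := card_le_card hts
    rw [card_sub hts]
    omega
  calc (s.powersetCard j).map (s - ·)
      = (s.powerset.filter (fun t ↦ card (s - t) = k)).map (s - ·) := by
        rw [powersetCard_eq_filter_powerset, filter_congr card_sub_eq_iff]
    _ = (s.powerset.map (s - ·)).filter (card · = k) := by rw [filter_map]; rfl
    _ = s.powersetCard k := by rw [map_sub_powerset, powersetCard_eq_filter_powerset]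

theorem join_map_cons (a : α) (S : Multiset (Multiset α)) :
    (S.map (cons a)).join = card S • {a} + S.join := by
  induction S using Multiset.induction_on with
  | empty => simp
  | cons t S ih =>
    rw [map_cons, join_cons, ih, card_cons, join_cons, succ_nsmul, ← singleton_add]
    abel

theorem join_powersetCard_succ (k : ℕ) (s : Multiset α) :
    (s.powersetCard (k + 1)).join = (card s - 1).choose k • s := by
  induction s using Multiset.induction_on generalizing k with
  | empty => simp [powersetCard_zero_right]
  | cons a s ih =>
    have pascal : (card s - 1).choose k • s + (s.powersetCard k).join = (card s).choose k • s := by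
      rcases hs : card s with _ | c
      · obtain rfl := card_eq_zero.mp hs
        cases k <;> simp [powersetCard_zero_right]
      · cases k with
        | zero => simp
        | succ k => rw [ih, hs, ← add_nsmul, Nat.choose_succ_succ, Nat.add_sub_cancel, add_comm]
    rw [powersetCard_cons, join_add, ih, join_map_cons, card_powersetCard, add_left_comm, pascal,
      card_cons, Nat.add_sub_cancel, ← nsmul_add, singleton_add]

end Multiset

section CommMonoid

variable {M : Type*} [CommMonoid M] {s t : Multiset M} {j k l : ℕ}

/-- The multiset of products of all `k`-element sub-multisets of `s`. It extends `preK` from `ℕ` to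
an arbitrary commutative monoid, and `Multiset.esymm` is its sum. -/
def subproducts (k : ℕ) (s : Multiset M) : Multiset M :=
  (s.powersetCard k).map prod

theorem prod_subproducts_succ (k : ℕ) (s : Multiset M) :
    (subproducts (k + 1) s).prod = s.prod ^ (card s - 1).choose k := by
  rw [subproducts, ← prod_join, join_powersetCard_succ, prod_nsmul]

theorem prod_eq_of_subproducts_eq [IsMulTorsionFree M] (hcard : card s = card t) (hk : 0 < k)
    (hks : k ≤ card s) (h : subproducts k s = subproducts k t) : s.prod = t.prod := by
  obtain ⟨k, rfl⟩ := Nat.exists_eq_succ_of_ne_zero hk.ne'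
  have hpow := congrArg prod h
  rw [prod_subproducts_succ, prod_subproducts_succ, ← hcard] at hpow
  have choose_ne_zero : (card s - 1).choose k ≠ 0 := (Nat.choose_pos (by omega)).ne'
  exact pow_left_injective choose_ne_zero hpow

theorem isRegular_multiset_prod (hs : ∀ x ∈ s, IsRegular x) : IsRegular s.prod :=
  prod_induction IsRegular s (fun _ _ ↦ IsRegular.mul) isRegular_one hs

theorem subproducts_eq_of_compl (hs : j + k = card s) (ht : j + k = card t)
    (hreg : ∀ x ∈ s, IsRegular x) (hprod : s.prod = t.prod)
    (h : subproducts j s = subproducts j t) : subproducts k s = subproducts k t := by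
  classical
  rw [subproducts, subproducts, ← map_sub_powersetCard hs, ← map_sub_powersetCard ht, map_map,
    map_map]
  refine map_eq_map_of_map_eq_map h fun u hu v hv huv ↦ ?_
  have hus : u ≤ s := (mem_powersetCard.mp hu).1
  have hvt : v ≤ t := (mem_powersetCard.mp hv).1
  have hu_reg : IsRegular u.prod := isRegular_multiset_prod fun x hx ↦ hreg x (mem_of_le hus hx)
  apply hu_reg.left
  calc u.prod * (s - u).prod = s.prod := by rw [← prod_add, add_tsub_cancel_of_le hus]
    _ = t.prod := hprod
    _ = u.prod * (t - v).prod := by rw [huv, ← prod_add, add_tsub_cancel_of_le hvt]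

theorem stmt_6_general [IsMulTorsionFree M] (hkl : k < l) {S : Set (Multiset M)}
    (hcard : ∀ s ∈ S, card s = l) (hreg : ∀ s ∈ S, ∀ x ∈ s, IsRegular x)
    (hinj : S.InjOn (subproducts k)) : S.InjOn (subproducts (l - k)) := by
  intro s hs t ht h
  have hsl : card s = l := hcard s hs
  have htl : card t = l := hcard t ht
  have hprod : s.prod = t.prod :=
    prod_eq_of_subproducts_eq (hsl.trans htl.symm) (by omega) (by omega) h
  exact hinj hs ht (subproducts_eq_of_compl (by omega) (by omega) (hreg s hs) hprod h)

end CommMonoid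

theorem stmt_6 (n k l : ℕ) (hn : 1 ≤ n) (hk : 1 ≤ k) (hkl : k < l)
    (hinj : ∀ lam mu : Multiset ℕ,
      (∀ x ∈ lam, 0 < x) → lam.sum = n → lam.card = l →
      (∀ x ∈ mu, 0 < x) → mu.sum = n → mu.card = l →
      preK k lam = preK k mu → lam = mu) :
    ∀ lam mu : Multiset ℕ,
      (∀ x ∈ lam, 0 < x) → lam.sum = n → lam.card = l →
      (∀ x ∈ mu, 0 < x) → mu.sum = n → mu.card = l →
      preK (l - k) lam = preK (l - k) mu → lam = mu := by
  intro lam mu hlam_pos hlam_sum hlam_card hmu_pos hmu_sum hmu_card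
  exact stmt_6_general hkl (S := {s | (∀ x ∈ s, 0 < x) ∧ s.sum = n ∧ card s = l})
    (fun _ hs ↦ hs.2.2) (fun _ hs x hx ↦ .of_ne_zero (hs.1 x hx).ne')
    (fun s hs t ht ↦ hinj s t hs.1 hs.2.1 hs.2.2 ht.1 ht.2.1 ht.2.2)
    ⟨hlam_pos, hlam_sum, hlam_card⟩ ⟨hmu_pos, hmu_sum, hmu_card⟩
end

section
/- For every positive integer n, the map pre_3 is injective on the set of partitions of n with exactly five parts. -/
/-!
Sort the parts as `a ≤ b ≤ c ≤ d ≤ e`. Among the ten triple products, the two smallest are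
`a * b * c` and `a * b * d`, and the two largest are `b * d * e` and `c * d * e`, so these four are
determined. So is `T = a * b * c * d * e`, because the ten triple products multiply to `T ^ 6`. Now
`(a * b * c) * (c * d * e) = c * T` yields `c`, and the other parts follow by cancellation.
-/

open Multiset

section Extremes

variable {α : Type*}

theorem eq_and_eq_of_cons_eq_cons_of_forall_le [PartialOrder α] {x y : α} {s t : Multiset α}
    (h : x ::ₘ s = y ::ₘ t) (hs : ∀ z ∈ s, x ≤ z) (ht : ∀ z ∈ t, y ≤ z) : x = y ∧ s = t := by
  have hxy : x = y := by
    rcases cons_eq_cons.1 h with ⟨hxy, -⟩ | ⟨-, u, rfl, rfl⟩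
    · exact hxy
    · exact le_antisymm (hs y (mem_cons_self y u)) (ht x (mem_cons_self x u))
  subst hxy
  exact ⟨rfl, (cons_inj_right x).1 h⟩

theorem eq_and_eq_of_cons_eq_cons_of_forall_ge [PartialOrder α] {x y : α} {s t : Multiset α}
    (h : x ::ₘ s = y ::ₘ t) (hs : ∀ z ∈ s, z ≤ x) (ht : ∀ z ∈ t, z ≤ y) : x = y ∧ s = t :=
  eq_and_eq_of_cons_eq_cons_of_forall_le (α := αᵒᵈ) h hs ht

/-- `p ≤ q` are the two smallest and `x ≤ w` the two largest elements of the multiset `s`, counted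
with multiplicity; the four are separate occurrences in `s`. -/
def HasExtremes [Preorder α] (s : Multiset α) (p q x w : α) : Prop :=
  ∃ t, s = p ::ₘ q ::ₘ w ::ₘ x ::ₘ t ∧ p ≤ q ∧ q ≤ x ∧ x ≤ w ∧ ∀ z ∈ t, q ≤ z ∧ z ≤ x

theorem HasExtremes.unique [PartialOrder α] {s : Multiset α} {p q x w p' q' x' w' : α}
    (h : HasExtremes s p q x w) (h' : HasExtremes s p' q' x' w') :
    p = p' ∧ q = q' ∧ x = x' ∧ w = w' := by
  obtain ⟨t, rfl, hpq, hqx, hxw, ht⟩ := h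
  obtain ⟨t', heq, hpq', hqx', hxw', ht'⟩ := h'
  obtain ⟨hp, heq⟩ := eq_and_eq_of_cons_eq_cons_of_forall_le heq (by grind) (by grind)
  obtain ⟨hq, heq⟩ := eq_and_eq_of_cons_eq_cons_of_forall_le heq (by grind) (by grind)
  obtain ⟨hw, heq⟩ := eq_and_eq_of_cons_eq_cons_of_forall_ge heq (by grind) (by grind)
  obtain ⟨hx, -⟩ := eq_and_eq_of_cons_eq_cons_of_forall_ge heq (by grind) (by grind)
  exact ⟨hp, hq, hx, hw⟩

theorem exists_sorted_of_card_eq_five [LinearOrder α] {s : Multiset α} (hs : s.card = 5) :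
    ∃ a b c d e, a ≤ b ∧ b ≤ c ∧ c ≤ d ∧ d ≤ e ∧ s = {a, b, c, d, e} := by
  have hlength : (s.sort (· ≤ ·)).length = 5 := (length_sort (· ≤ ·)).trans hs
  have hsorted := pairwise_sort s (· ≤ ·)
  have hcoe := sort_eq s (· ≤ ·)
  generalize s.sort (· ≤ ·) = l at hlength hsorted hcoe
  match l, hlength with
  | [a, b, c, d, e], _ =>
    simp only [List.pairwise_cons, List.mem_cons, forall_eq_or_imp] at hsorted
    exact ⟨a, b, c, d, e, by tauto, by tauto, by tauto, by tauto, hcoe.symm⟩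

end Extremes

section Products

variable {M : Type*} [CommMonoid M]

theorem prod_map_prod_powersetCard_succ (k : ℕ) (s : Multiset M) :
    ((s.powersetCard (k + 1)).map prod).prod = s.prod ^ (s.card - 1).choose k := by
  induction s using Multiset.induction_on generalizing k with
  | empty => simp [powersetCard_zero_right]
  | cons a s ih =>
    have hsplit : (((a ::ₘ s).powersetCard (k + 1)).map prod).prod =
        s.prod ^ (s.card - 1).choose k *
          (a ^ s.card.choose k * ((s.powersetCard k).map prod).prod) := by
      simp [ih, prod_map_mul]
    rw [hsplit]
    cases k with
    | zero => simp [mul_comm]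
    | succ k =>
      rcases eq_or_ne s 0 with rfl | hs
      · simp [powersetCard_zero_right]
      · obtain ⟨m, hm⟩ := Nat.exists_eq_add_one.2 (card_pos.2 hs)
        simp only [ih, hm, card_cons, prod_cons, Nat.add_sub_cancel, Nat.choose_succ_succ' m k]
        rw [mul_pow, pow_add s.prod]
        ac_rfl

theorem map_prod_powersetCard_three (a b c d e : M) :
    (({a, b, c, d, e} : Multiset M).powersetCard 3).map prod =
      a * b * c ::ₘ a * b * d ::ₘ c * d * e ::ₘ b * d * e ::ₘ
        {a * b * e, a * c * d, a * c * e, a * d * e, b * c * d, b * c * e} := by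
  simp only [insert_eq_cons, ← cons_zero, powersetCard_cons, powersetCard_zero_right,
    powersetCard_zero_left, map_add, map_cons, map_zero, prod_cons, prod_zero, mul_one,
    ← mul_assoc]
  simp only [← singleton_add]
  abel

theorem hasExtremes_map_prod_powersetCard_three [Preorder M] [IsOrderedMonoid M]
    {a b c d e : M} (hab : a ≤ b) (hbc : b ≤ c) (hcd : c ≤ d) (hde : d ≤ e) :
    HasExtremes ((({a, b, c, d, e} : Multiset M).powersetCard 3).map prod)
      (a * b * c) (a * b * d) (b * d * e) (c * d * e) := by
  refine ⟨_, map_prod_powersetCard_three a b c d e, ?_, ?_, ?_, ?_⟩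
  · gcongr
  · gcongr; order
  · gcongr
  · simp only [insert_eq_cons, mem_cons, mem_singleton, forall_eq_or_imp, forall_eq]
    refine ⟨?_, ?_, ?_, ?_, ?_, ?_⟩ <;> constructor <;> gcongr <;> order

theorem eq_of_extreme_triple_products_eq [IsCancelMul M] {a b c d e a' b' c' d' e' : M}
    (hprod : a * b * c * d * e = a' * b' * c' * d' * e')
    (habc : a * b * c = a' * b' * c') (habd : a * b * d = a' * b' * d')
    (hbde : b * d * e = b' * d' * e') (hcde : c * d * e = c' * d' * e') :
    a = a' ∧ b = b' ∧ c = c' ∧ d = d' ∧ e = e' := by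
  have hc : c = c' := by
    apply mul_right_cancel (b := a * b * c * d * e)
    calc
      c * (a * b * c * d * e) = a * b * c * (c * d * e) := by ac_rfl
      _ = a' * b' * c' * (c' * d' * e') := by rw [habc, hcde]
      _ = c' * (a' * b' * c' * d' * e') := by ac_rfl
      _ = c' * (a * b * c * d * e) := by rw [hprod]
  subst hc
  have hab : a * b = a' * b' := mul_right_cancel habc
  have hde : d * e = d' * e' := mul_left_cancel (by simpa only [mul_assoc] using hcde)
  have hb : b = b' := mul_right_cancel (b := d * e) (by rwa [← mul_assoc, hde, ← mul_assoc])
  have hd : d = d' := mul_left_cancel (a := a * b) (by rwa [← hab] at habd)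
  subst hb hd
  exact ⟨mul_right_cancel hab, rfl, rfl, rfl, mul_left_cancel hde⟩

theorem stmt_11_general [LinearOrder M] [IsOrderedCancelMonoid M] {s t : Multiset M}
    (hs : s.card = 5) (ht : t.card = 5)
    (h : (s.powersetCard 3).map prod = (t.powersetCard 3).map prod) : s = t := by
  have hprod : s.prod = t.prod := pow_left_injective (n := Nat.choose 4 2) (by decide) <| by
    simpa only [prod_map_prod_powersetCard_succ, hs, ht] using congrArg prod h
  obtain ⟨a, b, c, d, e, hab, hbc, hcd, hde, rfl⟩ := exists_sorted_of_card_eq_five hs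
  obtain ⟨a', b', c', d', e', hab', hbc', hcd', hde', rfl⟩ := exists_sorted_of_card_eq_five ht
  have hextremes := hasExtremes_map_prod_powersetCard_three hab hbc hcd hde
  rw [h] at hextremes
  obtain ⟨habc, habd, hbde, hcde⟩ :=
    hextremes.unique (hasExtremes_map_prod_powersetCard_three hab' hbc' hcd' hde')
  simp only [insert_eq_cons, prod_cons, prod_singleton, ← mul_assoc] at hprod
  obtain ⟨rfl, rfl, rfl, rfl, rfl⟩ := eq_of_extreme_triple_products_eq hprod habc habd hbde hcde
  rfl

end Products

theorem preK_map_coe (k : ℕ) (s : Multiset ℕ+) :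
    preK k (s.map (↑)) = ((s.powersetCard k).map prod).map (↑) := by
  simp only [preK, powersetCard_map, map_map]
  exact map_congr rfl fun t _ ↦ (map_multiset_prod PNat.coeMonoidHom t).symm

theorem stmt_11 (n : ℕ) (hn : 1 ≤ n) :
    ∀ lam mu : Multiset ℕ,
      (∀ x ∈ lam, 0 < x) → lam.sum = n → lam.card = 5 →
      (∀ x ∈ mu, 0 < x) → mu.sum = n → mu.card = 5 →
      preK 3 lam = preK 3 mu → lam = mu := by
  intro lam mu hlam _ hlam_card hmu _ hmu_card h
  lift lam to Multiset ℕ+ using hlam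
  lift mu to Multiset ℕ+ using hmu
  rw [card_map] at hlam_card hmu_card
  rw [preK_map_coe, preK_map_coe] at h
  rw [stmt_11_general hlam_card hmu_card (map_injective PNat.coe_injective h)]
end

section
/- For every positive integer n, the map pre_4 is injective on the set of partitions of n with exactly six parts. -/
/-!
Taking logarithms turns `pre_k` into the multiset of sums of the `k`-element sub-multisets of a
multiset of reals. For a multiset with `k + 2` elements, the `k`-element sums determine the total,
hence, by complementation, the sums over pairs.

That pair sums determine a multiset is the Selfridge–Straus argument. Expanding `∑ (x + y) ^ m`
over all ordered pairs, diagonal included, expresses `(2 N - 2 ^ m) p_m` through the pair sums and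
the power sums `p_1, …, p_{m-1}`, where `N` is the number of elements. When `N` is not a power of
two the coefficient never vanishes, so all power sums, and with them the multiset, are determined.
-/

open Finset (range)

section PowerSums

variable {R : Type*} [CommSemiring R]

/-- The power sum `p_k` of a multiset: the sum of the `k`-th powers of its elements. -/
def powerSum (k : ℕ) (s : Multiset R) : R :=
  (s.map (· ^ k)).sum

lemma powerSum_zero (s : Multiset R) : powerSum 0 s = s.card := by
  simp [powerSum]

lemma sum_map_eval_eq_sum_coeff_mul_powerSum (q : Polynomial R) (s : Multiset R) :
    (s.map fun x => q.eval x).sum = ∑ k ∈ range (q.natDegree + 1), q.coeff k * powerSum k s := by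
  simp only [Polynomial.eval_eq_sum_range, Multiset.sum_map_sum, Multiset.sum_map_mul_left,
    powerSum]

lemma sum_map_sum_map_add_pow (k : ℕ) (s : Multiset R) :
    (s.map fun x => (s.map fun y => (x + y) ^ k).sum).sum =
      ∑ m ∈ range (k + 1), powerSum m s * powerSum (k - m) s * k.choose m := by
  simp only [add_pow, Multiset.sum_map_sum, Multiset.sum_map_mul_right, Multiset.sum_map_mul_left,
    powerSum]

end PowerSums

theorem eq_of_powerSum_eq {R : Type*} [CommRing R] [IsDomain R] [CharZero R] {s t : Multiset R}
    (h : ∀ k, powerSum k s = powerSum k t) : s = t := by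
  classical
  ext x
  -- `q` vanishes on `s` and `t` except at `x`, so summing its values counts the copies of `x`.
  set U : Finset R := (s + t).toFinset
  set q : Polynomial R := Lagrange.nodal (U.erase x) id
  have q_eval_self : q.eval x ≠ 0 :=
    Lagrange.eval_nodal_not_at_node fun y hy => (Finset.ne_of_mem_erase hy).symm
  have sum_eval (r : Multiset R) (hr : r ⊆ s + t) :
      (r.map fun y => q.eval y).sum = r.count x * q.eval x := by
    rw [Finset.sum_multiset_map_count, Finset.sum_eq_single x, nsmul_eq_mul]
    · intro y hy hyx
      have hyU : y ∈ U.erase x :=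
        Finset.mem_erase.2 ⟨hyx, Multiset.mem_toFinset.2 (hr (Multiset.mem_toFinset.1 hy))⟩
      rw [show q.eval y = 0 from Lagrange.eval_nodal_at_node (v := id) hyU, smul_zero]
    · intro hx
      rw [Multiset.count_eq_zero.2 (mt Multiset.mem_toFinset.2 hx), zero_smul]
  have sum_eval_eq : (s.map fun y => q.eval y).sum = (t.map fun y => q.eval y).sum := by
    simp only [sum_map_eval_eq_sum_coeff_mul_powerSum, h]
  rw [sum_eval s (Multiset.subset_of_le (Multiset.le_add_right s t)),
    sum_eval t (Multiset.subset_of_le (Multiset.le_add_left t s))] at sum_eval_eq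
  exact_mod_cast mul_right_cancel₀ q_eval_self sum_eval_eq

section SubsetSums

variable {A : Type*} [AddCommMonoid A]

/-- The multiset of sums of all `k`-element sub-multisets of `s`, the additive analogue of
`preK`. -/
def subsetSums (k : ℕ) (s : Multiset A) : Multiset A :=
  (s.powersetCard k).map Multiset.sum

lemma card_subsetSums (k : ℕ) (s : Multiset A) : (subsetSums k s).card = s.card.choose k := by
  simp [subsetSums]

lemma subsetSums_zero_left (s : Multiset A) : subsetSums 0 s = {0} := by
  simp [subsetSums]

lemma subsetSums_one (s : Multiset A) : subsetSums 1 s = s := by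
  simp [subsetSums, Multiset.powersetCard_one]

lemma subsetSums_self (s : Multiset A) : subsetSums s.card s = {s.sum} := by
  simp [subsetSums]

lemma subsetSums_succ_zero (k : ℕ) : subsetSums (k + 1) (0 : Multiset A) = 0 := by
  simp [subsetSums, Multiset.powersetCard_zero_right]

lemma subsetSums_succ_cons (k : ℕ) (a : A) (s : Multiset A) :
    subsetSums (k + 1) (a ::ₘ s) = subsetSums (k + 1) s + (subsetSums k s).map (a + ·) := by
  simp [subsetSums, Multiset.powersetCard_cons]

lemma sum_subsetSums_succ {n : ℕ} (k : ℕ) {s : Multiset A} (hs : s.card = n + 1) :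
    (subsetSums (k + 1) s).sum = n.choose k • s.sum := by
  induction n generalizing k s with
  | zero =>
    obtain ⟨a, rfl⟩ := Multiset.card_eq_one.1 hs
    rw [← Multiset.cons_zero, subsetSums_succ_cons, subsetSums_succ_zero]
    cases k <;> simp [subsetSums_zero_left, subsetSums_succ_zero]
  | succ n ih =>
    cases k with
    | zero => simp [subsetSums_one]
    | succ k =>
      obtain ⟨a, s, rfl, hs_tail⟩ := Multiset.card_eq_succ_iff.1 hs
      rw [subsetSums_succ_cons, Multiset.sum_add, Multiset.sum_map_add, Multiset.map_const',
        Multiset.sum_replicate, Multiset.map_id', card_subsetSums, hs_tail,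
        ih _ hs_tail, ih _ hs_tail, Multiset.sum_cons, Nat.choose_succ_succ]
      module

lemma sum_map_sum_map_add_eq {M : Type*} [AddCommMonoid M] (f : A → M) (s : Multiset A) :
    (s.map fun x => (s.map fun y => f (x + y)).sum).sum =
      2 • ((subsetSums 2 s).map f).sum + (s.map fun x => f (x + x)).sum := by
  induction s using Multiset.induction with
  | empty => simp [subsetSums_succ_zero]
  | cons a s ih =>
    simp only [Multiset.map_cons, Multiset.sum_cons, Multiset.sum_map_add, ih,
      subsetSums_succ_cons 1, subsetSums_one, Multiset.map_add, Multiset.map_map, Multiset.sum_add,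
      Function.comp_apply, add_comm _ a]
    module

end SubsetSums

lemma subsetSums_eq_map_sub {A : Type*} [AddCommGroup A] {i j : ℕ} {s : Multiset A}
    (hs : s.card = i + j) : subsetSums i s = (subsetSums j s).map (s.sum - ·) := by
  induction s using Multiset.induction generalizing i j with
  | empty =>
    obtain ⟨rfl, rfl⟩ : i = 0 ∧ j = 0 := by simpa [eq_comm] using hs
    simp [subsetSums_zero_left]
  | cons a s ih =>
    match i, j with
    | 0, j =>
      obtain rfl : (a ::ₘ s).card = j := by simpa using hs
      simp [subsetSums_zero_left, subsetSums_self, -Multiset.card_cons]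
    | i, 0 =>
      obtain rfl : (a ::ₘ s).card = i := by simpa using hs
      simp [subsetSums_zero_left, subsetSums_self, -Multiset.card_cons]
    | i + 1, j + 1 =>
      have hs_tail : s.card = i + j + 1 := by simpa [← add_assoc, add_right_comm] using hs
      rw [subsetSums_succ_cons, subsetSums_succ_cons, ih (i := i + 1) (j := j) (by omega),
        ih (i := i) (j := j + 1) (by omega), add_comm]
      simp only [Multiset.map_add, Multiset.map_map, Multiset.sum_cons, Function.comp_apply,
        add_sub_add_left_eq_sub]
      simp only [add_sub_assoc]

section SelfridgeStraus

variable {R : Type*} [CommRing R]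

lemma mul_powerSum_succ_eq (k : ℕ) (s : Multiset R) :
    (2 * s.card - 2 ^ (k + 1)) * powerSum (k + 1) s =
      2 * powerSum (k + 1) (subsetSums 2 s) -
        ∑ m ∈ range k, powerSum (m + 1) s * powerSum (k - m) s * (k + 1).choose (m + 1) := by
  have expansion := (sum_map_sum_map_add_pow (k + 1) s).symm.trans
    (sum_map_sum_map_add_eq (· ^ (k + 1)) s)
  rw [Finset.sum_range_succ, Finset.sum_range_succ'] at expansion
  simp only [← two_mul, mul_pow, Multiset.sum_map_mul_left, Nat.add_sub_add_right, Nat.sub_zero,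
    Nat.sub_self, Nat.choose_zero_right, Nat.choose_self, Nat.cast_one, powerSum_zero, nsmul_eq_mul,
    Nat.cast_ofNat] at expansion
  simp only [powerSum] at expansion ⊢
  linear_combination expansion

variable [IsDomain R] [CharZero R] {s t : Multiset R}

lemma powerSum_eq_of_subsetSums_two_eq (hcard : s.card = t.card) (hpow : ∀ j, s.card ≠ 2 ^ j)
    (h : subsetSums 2 s = subsetSums 2 t) (k : ℕ) : powerSum k s = powerSum k t := by
  induction k using Nat.strong_induction_on with
  | _ k ih =>
    cases k with
    | zero => rw [powerSum_zero, powerSum_zero, hcard]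
    | succ k =>
      have coeff_ne_zero : (2 * s.card - 2 ^ (k + 1) : R) ≠ 0 := by
        rw [pow_succ', ← mul_sub]
        exact mul_ne_zero two_ne_zero (sub_ne_zero.2 (by exact_mod_cast hpow k))
      apply mul_left_cancel₀ coeff_ne_zero
      rw [mul_powerSum_succ_eq, hcard, mul_powerSum_succ_eq, h]
      congr 1
      refine Finset.sum_congr rfl fun m hm => ?_
      have hm := Finset.mem_range.1 hm
      rw [ih (m + 1) (by omega), ih (k - m) (by omega)]

theorem eq_of_subsetSums_two_eq (hcard : s.card = t.card) (hpow : ∀ j, s.card ≠ 2 ^ j)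
    (h : subsetSums 2 s = subsetSums 2 t) : s = t :=
  eq_of_powerSum_eq (powerSum_eq_of_subsetSums_two_eq hcard hpow h)

theorem eq_of_subsetSums_eq_of_card_eq_add_two {k : ℕ} (hk : ∀ j, k + 2 ≠ 2 ^ j)
    (hs : s.card = k + 2) (ht : t.card = k + 2) (h : subsetSums k s = subsetSums k t) : s = t := by
  obtain ⟨k, rfl⟩ : ∃ i, k = i + 1 := Nat.exists_eq_succ_of_ne_zero fun hk0 => hk 1 (by simp [hk0])
  have sum_eq : s.sum = t.sum := by
    have choose_ne_zero : (k + 2).choose k ≠ 0 := (Nat.choose_pos (by omega)).ne'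
    have smul_sum_eq := congrArg Multiset.sum h
    rw [sum_subsetSums_succ k hs, sum_subsetSums_succ k ht] at smul_sum_eq
    exact smul_right_injective R choose_ne_zero smul_sum_eq
  refine eq_of_subsetSums_two_eq (hs.trans ht.symm) (hs ▸ hk) ?_
  rw [subsetSums_eq_map_sub (hs.trans (add_comm _ _)),
    subsetSums_eq_map_sub (ht.trans (add_comm _ _)), h, sum_eq]

end SelfridgeStraus

lemma map_log_preK (k : ℕ) {P : Multiset ℕ} (hP : ∀ x ∈ P, 0 < x) :
    (preK k P).map (fun x : ℕ => Real.log x) = subsetSums k (P.map fun x : ℕ => Real.log x) := by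
  rw [preK, subsetSums, Multiset.powersetCard_map, Multiset.map_map, Multiset.map_map]
  refine Multiset.map_congr rfl fun t ht => ?_
  have ht_le := (Multiset.mem_powersetCard.1 ht).1
  have ht_ne_zero : ∀ x ∈ t.map (Nat.cast : ℕ → ℝ), x ≠ 0 := by
    simpa using fun x hx => (hP x (Multiset.mem_of_le ht_le hx)).ne'
  simp only [Function.comp_apply, Nat.cast_multiset_prod, Real.log_multiset_prod ht_ne_zero,
    Multiset.map_map]

lemma eq_of_map_log_eq {P Q : Multiset ℕ} (hP : ∀ x ∈ P, 0 < x) (hQ : ∀ x ∈ Q, 0 < x)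
    (h : P.map (fun x : ℕ => Real.log x) = Q.map fun x : ℕ => Real.log x) : P = Q := by
  have map_exp_log {S : Multiset ℕ} (hS : ∀ x ∈ S, 0 < x) :
      (S.map fun x : ℕ => Real.log x).map Real.exp = S.map Nat.cast := by
    rw [Multiset.map_map]
    exact Multiset.map_congr rfl fun x hx => Real.exp_log (Nat.cast_pos.2 (hS x hx))
  apply Multiset.map_injective (Nat.cast_injective (R := ℝ))
  rw [← map_exp_log hP, ← map_exp_log hQ, h]

theorem stmt_12_general {k : ℕ} (hk : ∀ j, k + 2 ≠ 2 ^ j) {lam mu : Multiset ℕ}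
    (hlam : ∀ x ∈ lam, 0 < x) (hlam_card : lam.card = k + 2)
    (hmu : ∀ x ∈ mu, 0 < x) (hmu_card : mu.card = k + 2)
    (h : preK k lam = preK k mu) : lam = mu := by
  apply eq_of_map_log_eq hlam hmu
  apply eq_of_subsetSums_eq_of_card_eq_add_two hk (by rwa [Multiset.card_map])
    (by rwa [Multiset.card_map])
  rw [← map_log_preK k hlam, ← map_log_preK k hmu, h]

theorem stmt_12 (n : ℕ) (hn : 1 ≤ n) :
    ∀ lam mu : Multiset ℕ,
      (∀ x ∈ lam, 0 < x) → lam.sum = n → lam.card = 6 →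
      (∀ x ∈ mu, 0 < x) → mu.sum = n → mu.card = 6 →
      preK 4 lam = preK 4 mu → lam = mu := by
  have six_ne_two_pow (j : ℕ) : 4 + 2 ≠ 2 ^ j := by
    rcases lt_or_ge j 3 with hj | hj
    · interval_cases j <;> decide
    · have := Nat.pow_le_pow_right two_pos hj
      omega
  exact fun _ _ hlam _ hlam_card hmu _ hmu_card =>
    stmt_12_general six_ne_two_pow hlam hlam_card hmu hmu_card
end

section
/- Let n ≥ 1 be an integer such that n+1 is not a perfect square. Then the number of partitions ν of n that lie in the image of pre_2 (i.e., for which there exists a partition λ of some positive integer with pre_2(λ) = ν) is at least τ(n+1)/2, where τ(m) denotes the number of positive divisors of m. -/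
/-!
A factorization `n + 1 = (a + 1) * (b + 1)` gives the partition `pre₂ {a, b, 1} = {ab, a, b}` of
`n`, where zeros are discarded if `a = 0` or `b = 0`. This partition `ν` determines the unordered
pair `{a, b}`: the product of `x + 1` over the parts `x` of `ν` does not see zeros, so it is
`(ab + 1) * (n + 1)`, which gives `ab` and then `a + b = n - ab`. Hence the map from ordered
factorizations of `n + 1`, of which there are `τ(n + 1)`, to partitions is at most two-to-one.
-/

lemma preK_zero (P : Multiset ℕ) : preK 0 P = {1} := by
  simp [preK]

lemma preK_succ_empty (k : ℕ) : preK (k + 1) 0 = 0 := by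
  simp [preK, Multiset.powersetCard_zero_right]

lemma preK_succ_cons (k a : ℕ) (P : Multiset ℕ) :
    preK (k + 1) (a ::ₘ P) = preK (k + 1) P + (preK k P).map (a * ·) := by
  simp only [preK, Multiset.powersetCard_cons, Multiset.map_add, Multiset.map_map,
    Function.comp_def, Multiset.prod_cons]

lemma preK_two_triple (x y z : ℕ) : preK 2 {x, y, z} = {y * z, x * z, x * y} := by
  rw [Multiset.insert_eq_cons, Multiset.insert_eq_cons, ← Multiset.cons_zero z]
  simp only [preK_succ_cons, preK_succ_empty, preK_zero, Multiset.map_zero, Multiset.map_cons,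
    Multiset.map_singleton, mul_one, zero_add, Multiset.singleton_add, Multiset.insert_eq_cons]

lemma preK_filter_ne_zero (k : ℕ) (P : Multiset ℕ) :
    preK k (P.filter (· ≠ 0)) = (preK k P).filter (· ≠ 0) := by
  induction P using Multiset.induction_on generalizing k with
  | empty => cases k <;> simp [preK_zero, preK_succ_empty, Multiset.filter_singleton]
  | cons a P ih =>
    cases k with
    | zero => simp [preK_zero, Multiset.filter_singleton]
    | succ k =>
      rcases eq_or_ne a 0 with rfl | ha
      · have h_zero : ((preK k P).map (0 * ·)).filter (· ≠ 0) = 0 := by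
          simp [Multiset.filter_eq_nil, Multiset.mem_replicate]
        rw [Multiset.filter_cons_of_neg _ (by simp), ih, preK_succ_cons, Multiset.filter_add,
          h_zero, add_zero]
      · simp [preK_succ_cons, Multiset.filter_map, ih, ha]

lemma prod_map_filter_of_eq_one {α M : Type*} [CommMonoid M] {p : α → Prop} [DecidablePred p]
    {f : α → M} {s : Multiset α} (hf : ∀ x ∈ s, ¬ p x → f x = 1) :
    ((s.filter p).map f).prod = (s.map f).prod := by
  have h_one : ((s.filter (¬ p ·)).map f).prod = 1 := by
    refine Multiset.prod_eq_one ?_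
    rintro _ hy
    obtain ⟨x, hx, rfl⟩ := Multiset.mem_map.1 hy
    exact hf x (Multiset.mem_filter.1 hx).1 (Multiset.mem_filter.1 hx).2
  calc ((s.filter p).map f).prod
      = ((s.filter p).map f).prod * ((s.filter (¬ p ·)).map f).prod := by rw [h_one, mul_one]
    _ = (s.map f).prod := by
      rw [← Multiset.prod_add, ← Multiset.map_add, Multiset.filter_add_not]

lemma pair_eq_or_swap_of_add_eq_of_mul_eq {R : Type*} [CommRing R] [NoZeroDivisors R]
    {a b c d : R} (hadd : a + b = c + d) (hmul : a * b = c * d) :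
    a = c ∧ b = d ∨ a = d ∧ b = c := by
  have hroots : (a - c) * (a - d) = 0 := by linear_combination a * hadd - hmul
  rcases mul_eq_zero.1 hroots with h | h
  · exact .inl ⟨sub_eq_zero.1 h, by linear_combination hadd - h⟩
  · exact .inr ⟨sub_eq_zero.1 h, by linear_combination hadd - h⟩

/-- The partition `pre₂ {a, b, 1}` attached to the factorization `(a + 1) * (b + 1)`. Zeros are
removed from `{a, b, 1}` so that it is a partition also for the trivial factorizations. -/
def factorPartition (a b : ℕ) : Multiset ℕ :=
  preK 2 (({a, b, 1} : Multiset ℕ).filter (· ≠ 0))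

namespace factorPartition

lemma eq_filter (a b : ℕ) :
    factorPartition a b = ({b, a, a * b} : Multiset ℕ).filter (· ≠ 0) := by
  rw [factorPartition, preK_filter_ne_zero, preK_two_triple, mul_one, mul_one]

lemma sum_add_one (a b : ℕ) : (factorPartition a b).sum + 1 = (a + 1) * (b + 1) := by
  have hsum : (factorPartition a b).sum = ({b, a, a * b} : Multiset ℕ).sum := by
    rw [eq_filter]
    exact (Nat.Partition.ofMultiset {b, a, a * b}).parts_sum
  simp only [hsum, Multiset.insert_eq_cons, Multiset.sum_cons, Multiset.sum_singleton]
  ring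

lemma prod_map_add_one (a b : ℕ) :
    ((factorPartition a b).map (· + 1)).prod = (a * b + 1) * ((a + 1) * (b + 1)) := by
  rw [eq_filter, prod_map_filter_of_eq_one (by simp)]
  simp only [Multiset.insert_eq_cons, Multiset.map_cons, Multiset.map_singleton,
    Multiset.prod_cons, Multiset.prod_singleton]
  ring

lemma eq_or_swap_of_eq {a b c d : ℕ} (h : factorPartition a b = factorPartition c d) :
    a = c ∧ b = d ∨ a = d ∧ b = c := by
  have hfactor : (a + 1) * (b + 1) = (c + 1) * (d + 1) := by
    rw [← sum_add_one, ← sum_add_one, h]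
  have hmul : a * b = c * d := by
    have hprod := prod_map_add_one a b
    rw [h, prod_map_add_one, hfactor] at hprod
    exact (Nat.succ_injective (Nat.eq_of_mul_eq_mul_right (by positivity) hprod)).symm
  have hadd : a + b = c + d := by linarith
  zify at hadd hmul ⊢
  exact pair_eq_or_swap_of_add_eq_of_mul_eq hadd hmul

lemma pos_of_mem {a b x : ℕ} (hx : x ∈ factorPartition a b) : 0 < x := by
  rw [eq_filter] at hx
  exact Nat.pos_of_ne_zero (Multiset.mem_filter.1 hx).2

lemma sum_pred {n : ℕ} {p : ℕ × ℕ} (hp : p ∈ (n + 1).divisorsAntidiagonal) :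
    (factorPartition (p.1 - 1) (p.2 - 1)).sum = n := by
  have hsum := sum_add_one (p.1 - 1) (p.2 - 1)
  rw [Nat.sub_one_add_one (Nat.left_ne_zero_of_mem_divisorsAntidiagonal hp),
    Nat.sub_one_add_one (Nat.right_ne_zero_of_mem_divisorsAntidiagonal hp),
    (Nat.mem_divisorsAntidiagonal.1 hp).1] at hsum
  exact Nat.succ_injective hsum

lemma eq_or_swap_of_pred_eq {m : ℕ} {p q : ℕ × ℕ} (hp : p ∈ m.divisorsAntidiagonal)
    (hq : q ∈ m.divisorsAntidiagonal)
    (h : factorPartition (p.1 - 1) (p.2 - 1) = factorPartition (q.1 - 1) (q.2 - 1)) :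
    p = q ∨ p = q.swap := by
  have hpred := eq_or_swap_of_eq h
  have hp_ne := Nat.ne_zero_of_mem_divisorsAntidiagonal hp
  have hq_ne := Nat.ne_zero_of_mem_divisorsAntidiagonal hq
  simp only [Prod.ext_iff, Prod.fst_swap, Prod.snd_swap]
  omega

lemma exists_preK_two_eq (a b : ℕ) :
    ∃ P : Multiset ℕ, (∀ x ∈ P, 0 < x) ∧ 0 < P.sum ∧ preK 2 P = factorPartition a b := by
  have hpos : ∀ x ∈ ({a, b, 1} : Multiset ℕ).filter (· ≠ 0), 0 < x := fun x hx ↦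
    Nat.pos_of_ne_zero (Multiset.mem_filter.1 hx).2
  have hone : 1 ∈ ({a, b, 1} : Multiset ℕ).filter (· ≠ 0) := by simp
  exact ⟨_, hpos, zero_lt_one.trans_le (Multiset.le_sum_of_mem hone), rfl⟩

end factorPartition

lemma finite_setOf_pos_of_sum_eq (n : ℕ) :
    {ν : Multiset ℕ | (∀ x ∈ ν, 0 < x) ∧ ν.sum = n}.Finite :=
  (Set.finite_range (Nat.Partition.parts (n := n))).subset
    fun ν ⟨hpos, hsum⟩ ↦ ⟨⟨ν, hpos _, hsum⟩, rfl⟩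

lemma card_divisorsAntidiagonal (n : ℕ) : n.divisorsAntidiagonal.card = n.divisors.card := by
  rw [← Nat.map_div_right_divisors, Finset.card_map]

lemma card_le_two_mul_card_image_of_eq_or_swap {α β : Type*} [DecidableEq β]
    {f : α × α → β} {s : Finset (α × α)}
    (hf : ∀ p ∈ s, ∀ q ∈ s, f p = f q → p = q ∨ p = q.swap) :
    s.card ≤ 2 * (s.image f).card := by
  classical
  refine Finset.card_le_mul_card_image s 2 fun ν hν ↦ ?_
  obtain ⟨q, hq, rfl⟩ := Finset.mem_image.1 hν
  have hfiber : s.filter (f · = f q) ⊆ {q, q.swap} := fun p hp ↦ by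
    obtain ⟨hps, hpq⟩ := Finset.mem_filter.1 hp
    simpa using hf p hps q hq hpq
  exact (Finset.card_le_card hfiber).trans Finset.card_le_two

theorem stmt_16_general (n : ℕ) :
    (n + 1).divisors.card ≤
      2 * {ν : Multiset ℕ | (∀ x ∈ ν, 0 < x) ∧ ν.sum = n ∧
        ∃ lam : Multiset ℕ, (∀ x ∈ lam, 0 < x) ∧ 0 < lam.sum ∧
          preK 2 lam = ν}.ncard := by
  set S := {ν : Multiset ℕ | _}
  have hfinite : S.Finite :=
    (finite_setOf_pos_of_sum_eq n).subset fun ν ⟨hpos, hsum, _⟩ ↦ ⟨hpos, hsum⟩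
  let f : ℕ × ℕ → Multiset ℕ := fun p ↦ factorPartition (p.1 - 1) (p.2 - 1)
  have hmaps : ∀ p ∈ (n + 1).divisorsAntidiagonal, f p ∈ S := fun p hp ↦
    ⟨fun _ ↦ factorPartition.pos_of_mem, factorPartition.sum_pred hp,
      factorPartition.exists_preK_two_eq _ _⟩
  have himage : ((n + 1).divisorsAntidiagonal.image f).card ≤ S.ncard := by
    rw [← Set.ncard_coe_finset, Finset.coe_image]
    exact Set.ncard_le_ncard (Set.image_subset_iff.2 hmaps) hfinite
  calc (n + 1).divisors.card
      = (n + 1).divisorsAntidiagonal.card := (card_divisorsAntidiagonal _).symm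
    _ ≤ 2 * ((n + 1).divisorsAntidiagonal.image f).card :=
      card_le_two_mul_card_image_of_eq_or_swap fun _ hp _ hq ↦
        factorPartition.eq_or_swap_of_pred_eq hp hq
    _ ≤ 2 * S.ncard := Nat.mul_le_mul_left 2 himage

theorem stmt_16 (n : ℕ) (hn : 1 ≤ n) (hsq : ¬ IsSquare (n + 1)) :
    (n + 1).divisors.card / 2 ≤
      {ν : Multiset ℕ | (∀ x ∈ ν, 0 < x) ∧ ν.sum = n ∧
        ∃ lam : Multiset ℕ, (∀ x ∈ lam, 0 < x) ∧ 0 < lam.sum ∧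
          preK 2 lam = ν}.ncard :=
  Nat.div_le_of_le_mul (stmt_16_general n)
end
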